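/- arXiv:2112.02716 — 2 statements merged into one kernel-verified Lean document; each statement's English description precedes it below -/
import Mathlib

section
/- Let F be a division ring and n ≥ 1. (1) Let (A, v) and (A′, v′) be controllable pairs with A, A′ ∈ F^{n×n}, and let p, p′ be monic polynomials with {g ∈ F[z] : (vg)^ℓ(A) = 0} = p·F[z] and {g ∈ F[z] : (v′g)^ℓ(A′) = 0} = p′·F[z]. Then there exists an invertible T ∈ F^{n×n} with A′ = T A T^{−1} and v′ = T v if and only if p = p′. (2) Let (u, A) and (u′, A′) be observable pairs with A, A′ ∈ F^{n×n}, and q, q′ monic with {g : (gu)^r(A) = 0} = F[z]·q and {g : (g u′)^r(A′) = 0} = F[z]·q′. Then there exists an invertible T with A′ = T A T^{−1} and u′ = u T^{−1} if and only if q = q′. -/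
/-!
The minimal polynomial of a controllable pair records exactly the right-linear relations among the
vectors `Aʲ v`. A similarity `T` carries `Aʲ v` to `A'ʲ v'`, hence preserves these relations
(`leftEval_conj`), and the monic generator of a right ideal is unique (`eq_of_right_gen`).

Conversely, suppose the relations of `(A, v)` all hold for `(A', v')`. Put `M = 𝔠_{A,v}`,
`M' = 𝔠_{A',v'}` and `T = M' M⁻¹`. Each `Aʲ v` equals `M c` with `c = M⁻¹ Aʲ v`, so the polynomial
`zʲ - ∑ᵢ zⁱ cᵢ` annihilates `(A, v)`, hence `(A', v')`; this says `A'ʲ v' = M' c = T Aʲ v`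
(`pow_mul_eq_of_relations`). Taking `j = 0` gives `v' = T v`, and comparing the columns of
`T A M` and `A' T M` gives `T A = A' T` (`similar_of_relations_left`). No commutativity or
determinant is involved. The observable case is the mirror image.
-/

open Polynomial Matrix Finset

section Defs

variable {F : Type*} [DivisionRing F]

/-- The scalar `c` regarded as a `1 × 1` matrix. -/
noncomputable def oneByOne (c : F) : Matrix (Fin 1) (Fin 1) F := Matrix.of fun _ _ => c

/-- Left evaluation `(v f)^{𝔢ℓ}(A) := ∑ⱼ Aʲ v fⱼ` of `f ∈ F[z]` at an input pair `(A, v)`. -/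
noncomputable def leftEval {m : Type*} [Fintype m] [DecidableEq m]
    (A : Matrix m m F) (v : Matrix m (Fin 1) F) (f : F[X]) : Matrix m (Fin 1) F :=
  ∑ j ∈ Finset.range (f.natDegree + 1), A ^ j * v * oneByOne (f.coeff j)

/-- Right evaluation `(f u)^{𝔢r}(A) := ∑ⱼ fⱼ u Aʲ` of `f ∈ F[z]` at an output pair `(u, A)`. -/
noncomputable def rightEval {m : Type*} [Fintype m] [DecidableEq m]
    (u : Matrix (Fin 1) m F) (A : Matrix m m F) (f : F[X]) : Matrix (Fin 1) m F :=
  ∑ j ∈ Finset.range (f.natDegree + 1), oneByOne (f.coeff j) * u * A ^ j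

/-- Controllability matrix `[v, Av, …, A^{n-1} v]`. -/
noncomputable def ctrbMat {n : ℕ} (A : Matrix (Fin n) (Fin n) F)
    (v : Matrix (Fin n) (Fin 1) F) : Matrix (Fin n) (Fin n) F :=
  Matrix.of fun i j => (A ^ (j : ℕ) * v) i 0

/-- Observability matrix with rows `u, uA, …, u A^{n-1}`. -/
noncomputable def obsMat {n : ℕ} (u : Matrix (Fin 1) (Fin n) F)
    (A : Matrix (Fin n) (Fin n) F) : Matrix (Fin n) (Fin n) F :=
  Matrix.of fun i j => (u * A ^ (i : ℕ)) 0 j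

/-- Left companion matrix of a (monic, degree `n`) polynomial: its columns are
`e₂, …, eₙ, -(p₀, …, p_{n-1})ᵀ`. -/
noncomputable def Cl (n : ℕ) (p : F[X]) : Matrix (Fin n) (Fin n) F :=
  Matrix.of fun i j =>
    if (j : ℕ) = n - 1 then -(p.coeff (i : ℕ)) else if (i : ℕ) = (j : ℕ) + 1 then 1 else 0

/-- Right companion matrix: the transpose of the left one. -/
noncomputable def Cr (n : ℕ) (p : F[X]) : Matrix (Fin n) (Fin n) F := (Cl n p)ᵀ

/-- First standard basis column vector of `F^{n×1}`. -/
noncomputable def e1 (F : Type*) [DivisionRing F] (n : ℕ) : Matrix (Fin n) (Fin 1) F :=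
  Matrix.of fun i _ => if (i : ℕ) = 0 then 1 else 0

/-- First standard basis row vector of `F^{1×n}`. -/
noncomputable def e1row (F : Type*) [DivisionRing F] (n : ℕ) : Matrix (Fin 1) (Fin n) F :=
  Matrix.of fun _ j => if (j : ℕ) = 0 then 1 else 0

/-- Two-sided evaluation `(v f u)^{𝔢ts}(A,B) := ∑_{i+j+1 ≤ deg f} Aⁱ v f_{i+j+1} u Bʲ`. -/
noncomputable def tsEval {n k : ℕ} (A : Matrix (Fin n) (Fin n) F) (B : Matrix (Fin k) (Fin k) F)
    (v : Matrix (Fin n) (Fin 1) F) (u : Matrix (Fin 1) (Fin k) F) (f : F[X]) :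
    Matrix (Fin n) (Fin k) F :=
  ∑ i ∈ Finset.range f.natDegree, ∑ j ∈ Finset.range f.natDegree,
    A ^ i * v * oneByOne (f.coeff (i + j + 1)) * u * B ^ j

end Defs

section Auxiliary

variable {F : Type*} [DivisionRing F] {n : ℕ}

/-! ### Uniqueness of monic generators -/

theorem eq_of_right_gen {p p' : F[X]} (hp : p.Monic) (hp' : p'.Monic)
    (h : ∀ g : F[X], (∃ k, g = p * k) ↔ ∃ k, g = p' * k) : p = p' := by
  obtain ⟨a, ha⟩ := (h p).1 ⟨1, (mul_one p).symm⟩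
  obtain ⟨b, hb⟩ := (h p').2 ⟨1, (mul_one p').symm⟩
  have hab : a = C a.leadingCoeff := by
    have h1 : p * (b * a) = p * 1 := by rw [← mul_assoc, ← hb, ← ha, mul_one]
    have h2 := mul_left_cancel₀ hp.ne_zero h1
    have ha0 : a ≠ 0 := by rintro rfl; simp at h2
    have hb0 : b ≠ 0 := by rintro rfl; simp at h2
    have h3 := congrArg natDegree h2
    rw [natDegree_mul hb0 ha0, natDegree_one] at h3
    have h4 : a.natDegree = 0 := by omega
    rw [leadingCoeff, h4]
    exact eq_C_of_natDegree_eq_zero h4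
  have hl : a.leadingCoeff = 1 := by
    have h5 := congrArg leadingCoeff ha
    rwa [leadingCoeff_mul, hp.leadingCoeff, hp'.leadingCoeff, one_mul, eq_comm] at h5
  rw [ha, hab, hl, C_1, mul_one]

theorem eq_of_left_gen {q q' : F[X]} (hq : q.Monic) (hq' : q'.Monic)
    (h : ∀ g : F[X], (∃ k, g = k * q) ↔ ∃ k, g = k * q') : q = q' := by
  obtain ⟨a, ha⟩ := (h q).1 ⟨1, (one_mul q).symm⟩
  obtain ⟨b, hb⟩ := (h q').2 ⟨1, (one_mul q').symm⟩
  have hab : a = C a.leadingCoeff := by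
    have h1 : (a * b) * q = 1 * q := by rw [mul_assoc, ← hb, ← ha, one_mul]
    have h2 := mul_right_cancel₀ hq.ne_zero h1
    have ha0 : a ≠ 0 := by rintro rfl; simp at h2
    have hb0 : b ≠ 0 := by rintro rfl; simp at h2
    have h3 := congrArg natDegree h2
    rw [natDegree_mul ha0 hb0, natDegree_one] at h3
    have h4 : a.natDegree = 0 := by omega
    rw [leadingCoeff, h4]
    exact eq_C_of_natDegree_eq_zero h4
  have hl : a.leadingCoeff = 1 := by
    have h5 := congrArg leadingCoeff ha
    rwa [leadingCoeff_mul, hq.leadingCoeff, hq'.leadingCoeff, mul_one, eq_comm] at h5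
  rw [ha, hab, hl, C_1, one_mul]

/-! ### Scalars as matrices of size one -/

theorem oneByOne_zero : oneByOne (0 : F) = 0 := by
  ext i j; simp [oneByOne]

theorem oneByOne_add (a b : F) : oneByOne (a + b) = oneByOne a + oneByOne b := by
  ext i j; simp [oneByOne]

theorem oneByOne_one : oneByOne (1 : F) = 1 := by
  ext i j; rw [Subsingleton.elim i j]; simp [oneByOne]

/-! ### Controllable pairs -/

theorem leftEval_eq_sum (A : Matrix (Fin n) (Fin n) F) (v : Matrix (Fin n) (Fin 1) F) (f : F[X]) :
    leftEval A v f = f.sum fun j c => A ^ j * v * oneByOne c := by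
  rw [leftEval, sum_over_range]
  intro j; rw [oneByOne_zero, Matrix.mul_zero]

/-- Left evaluation as an additive homomorphism in the polynomial. -/
noncomputable def leftEvalHom (A : Matrix (Fin n) (Fin n) F) (v : Matrix (Fin n) (Fin 1) F) :
    F[X] →+ Matrix (Fin n) (Fin 1) F :=
  AddMonoidHom.mk' (leftEval A v) fun f g => by
    simp only [leftEval_eq_sum]
    apply sum_add_index
    · intro j; rw [oneByOne_zero, Matrix.mul_zero]
    · intro j a b; rw [oneByOne_add, Matrix.mul_add]

theorem leftEvalHom_monomial (A : Matrix (Fin n) (Fin n) F) (v : Matrix (Fin n) (Fin 1) F)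
    (j : ℕ) (c : F) : leftEvalHom A v (monomial j c) = A ^ j * v * oneByOne c := by
  change leftEval A v _ = _
  rw [leftEval_eq_sum]
  apply sum_monomial_index
  rw [oneByOne_zero, Matrix.mul_zero]

theorem ctrbMat_mul (A : Matrix (Fin n) (Fin n) F) (v c : Matrix (Fin n) (Fin 1) F) :
    ctrbMat A v * c = ∑ i : Fin n, A ^ (i : ℕ) * v * oneByOne (c i 0) := by
  ext i j
  obtain rfl := Subsingleton.elim j 0
  rw [Matrix.sum_apply, Matrix.mul_apply]
  refine Finset.sum_congr rfl fun k _ => ?_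
  rw [Matrix.mul_apply (N := oneByOne _)]
  simp [ctrbMat, oneByOne]

/-- The polynomial `zʲ - ∑ᵢ zⁱ cᵢ` expresses the relation `Aʲ v = 𝔠_{A,v} c`. -/
theorem leftEval_relation (A : Matrix (Fin n) (Fin n) F) (v c : Matrix (Fin n) (Fin 1) F) (j : ℕ) :
    leftEval A v (monomial j 1 - ∑ i : Fin n, monomial (i : ℕ) (c i 0)) =
      A ^ j * v - ctrbMat A v * c := by
  change leftEvalHom A v _ = _
  rw [map_sub, map_sum, ctrbMat_mul]
  simp only [leftEvalHom_monomial, oneByOne_one, Matrix.mul_one]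

/-- Since `N` is a right inverse of `𝔠_{A,v}`, the column `N Aʲ v` holds coordinates of `Aʲ v`; the
relation they give passes to `(A', v')`. -/
theorem pow_mul_eq_of_relations {A A' : Matrix (Fin n) (Fin n) F} {v v' : Matrix (Fin n) (Fin 1) F}
    (h : ∀ g : F[X], leftEval A v g = 0 → leftEval A' v' g = 0)
    {N : Matrix (Fin n) (Fin n) F} (hN : ctrbMat A v * N = 1) (j : ℕ) :
    A' ^ j * v' = ctrbMat A' v' * N * (A ^ j * v) := by
  have h0 := h (monomial j 1 - ∑ i : Fin n, monomial (i : ℕ) ((N * (A ^ j * v)) i 0)) (by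
    rw [leftEval_relation, ← Matrix.mul_assoc (ctrbMat A v), hN, Matrix.one_mul, sub_self])
  rw [leftEval_relation, sub_eq_zero] at h0
  rw [h0, Matrix.mul_assoc]

theorem mul_ctrbMat_apply (S A : Matrix (Fin n) (Fin n) F) (v : Matrix (Fin n) (Fin 1) F)
    (i j : Fin n) : (S * ctrbMat A v) i j = (S * (A ^ (j : ℕ) * v)) i 0 := by
  simp only [Matrix.mul_apply (M := S), ctrbMat, Matrix.of_apply]

theorem similar_of_relations_left {A A' : Matrix (Fin n) (Fin n) F}
    {v v' : Matrix (Fin n) (Fin 1) F}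
    (hc : IsUnit (ctrbMat A v)) (hc' : IsUnit (ctrbMat A' v'))
    (h : ∀ g : F[X], leftEval A v g = 0 → leftEval A' v' g = 0) :
    ∃ T T' : Matrix (Fin n) (Fin n) F,
      T * T' = 1 ∧ T' * T = 1 ∧ A' = T * A * T' ∧ v' = T * v := by
  obtain ⟨N, hMN, hNM⟩ := isUnit_iff_exists.1 hc
  obtain ⟨N', hMN', hNM'⟩ := isUnit_iff_exists.1 hc'
  have key := pow_mul_eq_of_relations h hMN
  have hT : ctrbMat A' v' * N * (ctrbMat A v * N') = 1 := by
    rw [mul_assoc, ← mul_assoc N, hNM, one_mul, hMN']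
  have hcomm : ctrbMat A' v' * N * A = A' * (ctrbMat A' v' * N) := by
    apply hc.mul_right_cancel
    ext i j
    rw [mul_ctrbMat_apply, mul_ctrbMat_apply, Matrix.mul_assoc _ A, ← Matrix.mul_assoc A, ← pow_succ',
      ← key, Matrix.mul_assoc A', ← key, pow_succ', Matrix.mul_assoc]
  refine ⟨ctrbMat A' v' * N, ctrbMat A v * N', hT, ?_, ?_, ?_⟩
  · rw [mul_assoc, ← mul_assoc N', hNM', one_mul, hMN]
  · rw [hcomm, mul_assoc A', hT, mul_one]
  · simpa using key 0

theorem leftEval_conj {A A' T T' : Matrix (Fin n) (Fin n) F} {v v' : Matrix (Fin n) (Fin 1) F}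
    (hT : T' * T = 1) (hA : A' = T * A * T') (hv : v' = T * v) (g : F[X]) :
    leftEval A' v' g = T * leftEval A v g := by
  have hpow : ∀ j : ℕ, A' ^ j * T = T * A ^ j := by
    intro j
    refine (SemiconjBy.pow_right (a := T) (x := A) (y := A') ?_ j).symm
    change T * A = A' * T
    rw [hA, mul_assoc, hT, mul_one]
  rw [leftEval, leftEval, Matrix.mul_sum]
  refine Finset.sum_congr rfl fun j _ => ?_
  rw [hv, ← Matrix.mul_assoc (A' ^ j), hpow]
  simp only [Matrix.mul_assoc]

/-! ### Observable pairs -/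

theorem rightEval_eq_sum (u : Matrix (Fin 1) (Fin n) F) (A : Matrix (Fin n) (Fin n) F) (f : F[X]) :
    rightEval u A f = f.sum fun j c => oneByOne c * u * A ^ j := by
  rw [rightEval, sum_over_range]
  intro j; rw [oneByOne_zero, Matrix.zero_mul, Matrix.zero_mul]

/-- Right evaluation as an additive homomorphism in the polynomial. -/
noncomputable def rightEvalHom (u : Matrix (Fin 1) (Fin n) F) (A : Matrix (Fin n) (Fin n) F) :
    F[X] →+ Matrix (Fin 1) (Fin n) F :=
  AddMonoidHom.mk' (rightEval u A) fun f g => by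
    simp only [rightEval_eq_sum]
    apply sum_add_index
    · intro j; rw [oneByOne_zero, Matrix.zero_mul, Matrix.zero_mul]
    · intro j a b; rw [oneByOne_add, Matrix.add_mul, Matrix.add_mul]

theorem rightEvalHom_monomial (u : Matrix (Fin 1) (Fin n) F) (A : Matrix (Fin n) (Fin n) F)
    (j : ℕ) (c : F) : rightEvalHom u A (monomial j c) = oneByOne c * u * A ^ j := by
  change rightEval u A _ = _
  rw [rightEval_eq_sum]
  apply sum_monomial_index
  rw [oneByOne_zero, Matrix.zero_mul, Matrix.zero_mul]

theorem mul_obsMat (u c : Matrix (Fin 1) (Fin n) F) (A : Matrix (Fin n) (Fin n) F) :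
    c * obsMat u A = ∑ i : Fin n, oneByOne (c 0 i) * u * A ^ (i : ℕ) := by
  ext i j
  obtain rfl := Subsingleton.elim i 0
  rw [Matrix.sum_apply, Matrix.mul_apply]
  refine Finset.sum_congr rfl fun k _ => ?_
  rw [Matrix.mul_assoc, Matrix.mul_apply (M := oneByOne _)]
  simp [obsMat, oneByOne]

/-- The polynomial `zʲ - ∑ᵢ cᵢ zⁱ` expresses that `u Aʲ` is `c` times the observability matrix. -/
theorem rightEval_relation (u c : Matrix (Fin 1) (Fin n) F) (A : Matrix (Fin n) (Fin n) F) (j : ℕ) :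
    rightEval u A (monomial j 1 - ∑ i : Fin n, monomial (i : ℕ) (c 0 i)) =
      u * A ^ j - c * obsMat u A := by
  change rightEvalHom u A _ = _
  rw [map_sub, map_sum, mul_obsMat]
  simp only [rightEvalHom_monomial, oneByOne_one, Matrix.one_mul]

/-- The row `u Aʲ N` holds coordinates of `u Aʲ` over the rows of the observability matrix; the
relation they give passes to `(u', A')`. -/
theorem mul_pow_eq_of_relations {A A' : Matrix (Fin n) (Fin n) F} {u u' : Matrix (Fin 1) (Fin n) F}
    (h : ∀ g : F[X], rightEval u A g = 0 → rightEval u' A' g = 0)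
    {N : Matrix (Fin n) (Fin n) F} (hN : N * obsMat u A = 1) (j : ℕ) :
    u' * A' ^ j = u * A ^ j * (N * obsMat u' A') := by
  have h0 := h (monomial j 1 - ∑ i : Fin n, monomial (i : ℕ) ((u * A ^ j * N) 0 i)) (by
    rw [rightEval_relation, Matrix.mul_assoc _ N, hN, Matrix.mul_one, sub_self])
  rw [rightEval_relation, sub_eq_zero] at h0
  rw [h0, Matrix.mul_assoc _ N]

theorem obsMat_mul_apply (S A : Matrix (Fin n) (Fin n) F) (u : Matrix (Fin 1) (Fin n) F)
    (i j : Fin n) : (obsMat u A * S) i j = (u * A ^ (i : ℕ) * S) 0 j := by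
  simp only [Matrix.mul_apply (N := S), obsMat, Matrix.of_apply]

theorem similar_of_relations_right {A A' : Matrix (Fin n) (Fin n) F}
    {u u' : Matrix (Fin 1) (Fin n) F}
    (ho : IsUnit (obsMat u A)) (ho' : IsUnit (obsMat u' A'))
    (h : ∀ g : F[X], rightEval u A g = 0 → rightEval u' A' g = 0) :
    ∃ T T' : Matrix (Fin n) (Fin n) F,
      T * T' = 1 ∧ T' * T = 1 ∧ A' = T * A * T' ∧ u' = u * T' := by
  obtain ⟨N, hMN, hNM⟩ := isUnit_iff_exists.1 ho
  obtain ⟨N', hMN', hNM'⟩ := isUnit_iff_exists.1 ho'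
  have key := mul_pow_eq_of_relations h hNM
  have hT : N' * obsMat u A * (N * obsMat u' A') = 1 := by
    rw [mul_assoc, ← mul_assoc _ N, hMN, one_mul, hNM']
  have hcomm : A * (N * obsMat u' A') = N * obsMat u' A' * A' := by
    apply ho.mul_left_cancel
    ext i j
    rw [obsMat_mul_apply, obsMat_mul_apply, ← Matrix.mul_assoc _ A, Matrix.mul_assoc u, ← pow_succ,
      ← key, ← Matrix.mul_assoc _ _ A', ← key, pow_succ, Matrix.mul_assoc]
  refine ⟨N' * obsMat u A, N * obsMat u' A', hT, ?_, ?_, ?_⟩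
  · rw [mul_assoc, ← mul_assoc _ N', hMN', one_mul, hNM]
  · rw [mul_assoc _ A, hcomm, ← mul_assoc, hT, one_mul]
  · simpa using key 0

theorem rightEval_conj {A A' T T' : Matrix (Fin n) (Fin n) F} {u u' : Matrix (Fin 1) (Fin n) F}
    (hT : T' * T = 1) (hA : A' = T * A * T') (hu : u' = u * T') (g : F[X]) :
    rightEval u' A' g = rightEval u A g * T' := by
  have hpow : ∀ j : ℕ, T' * A' ^ j = A ^ j * T' := by
    intro j
    refine SemiconjBy.pow_right (a := T') (x := A') (y := A) ?_ j
    change T' * A' = A * T'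
    rw [hA, ← mul_assoc, ← mul_assoc, hT, one_mul]
  rw [rightEval, rightEval, Matrix.sum_mul]
  refine Finset.sum_congr rfl fun j _ => ?_
  rw [hu, Matrix.mul_assoc, Matrix.mul_assoc u, hpow]
  simp only [Matrix.mul_assoc]

end Auxiliary

/-- Theorem `T:4.5a`: two controllable pairs (resp. observable pairs)
are similar if and only if their minimal polynomials coincide. -/
theorem statement5 {F : Type*} [DivisionRing F] {n : ℕ} (hn : 1 ≤ n)
    (A A' : Matrix (Fin n) (Fin n) F) (v v' : Matrix (Fin n) (Fin 1) F)
    (hc : IsUnit (ctrbMat A v)) (hc' : IsUnit (ctrbMat A' v'))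
    (p p' : F[X]) (hp : p.Monic) (hp' : p'.Monic)
    (hpI : ∀ g : F[X], leftEval A v g = 0 ↔ ∃ h : F[X], g = p * h)
    (hpI' : ∀ g : F[X], leftEval A' v' g = 0 ↔ ∃ h : F[X], g = p' * h)
    (B B' : Matrix (Fin n) (Fin n) F) (u u' : Matrix (Fin 1) (Fin n) F)
    (ho : IsUnit (obsMat u B)) (ho' : IsUnit (obsMat u' B'))
    (q q' : F[X]) (hq : q.Monic) (hq' : q'.Monic)
    (hqI : ∀ g : F[X], rightEval u B g = 0 ↔ ∃ h : F[X], g = h * q)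
    (hqI' : ∀ g : F[X], rightEval u' B' g = 0 ↔ ∃ h : F[X], g = h * q') :
    ((∃ T T' : Matrix (Fin n) (Fin n) F,
        T * T' = 1 ∧ T' * T = 1 ∧ A' = T * A * T' ∧ v' = T * v) ↔ p = p') ∧
    ((∃ T T' : Matrix (Fin n) (Fin n) F,
        T * T' = 1 ∧ T' * T = 1 ∧ B' = T * B * T' ∧ u' = u * T') ↔ q = q') := by
  constructor
  · constructor
    · rintro ⟨T, T', -, hT', hA, hv⟩
      refine eq_of_right_gen hp hp' fun g => ?_
      rw [← hpI, ← hpI', leftEval_conj hT' hA hv]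
      refine ⟨fun h => by rw [h, Matrix.mul_zero], fun h => ?_⟩
      rw [← Matrix.one_mul (leftEval A v g), ← hT', Matrix.mul_assoc, h, Matrix.mul_zero]
    · rintro rfl
      exact similar_of_relations_left hc hc' fun g hg => (hpI' g).2 ((hpI g).1 hg)
  · constructor
    · rintro ⟨T, T', -, hT', hB, hu⟩
      refine eq_of_left_gen hq hq' fun g => ?_
      rw [← hqI, ← hqI', rightEval_conj hT' hB hu]
      refine ⟨fun h => by rw [h, Matrix.zero_mul], fun h => ?_⟩
      rw [← Matrix.mul_one (rightEval u B g), ← hT', ← Matrix.mul_assoc, h, Matrix.zero_mul]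
    · rintro rfl
      exact similar_of_relations_right ho ho' fun g hg => (hqI' g).2 ((hqI g).1 hg)
end

section
/- Let F be a division ring, k ≥ 1, and let f_1, …, f_k ∈ F[z] be monic with deg f_i = n_i ≥ 1 and n := n_1 + … + n_k. Assume f_1, …, f_k are left coprime, in the sense that every nonzero f ∈ ∩_{i=1}^k f_i·F[z] has degree ≥ n. Let C := blockdiag(C_ℓ(f_1), …, C_ℓ(f_k)) ∈ F^{n×n} and let E ∈ F^{n×1} be the column obtained by stacking the vectors e_{1,n_1}, …, e_{1,n_k}. Then the pair (C, E) is controllable, {f ∈ F[z] : (Ef)^ℓ(C) = 0} = ∩_{i=1}^k f_i·F[z], and the monic generator of this ideal (the least right common multiple of f_1, …, f_k) equals z^n + Σ_{m=0}^{n−1} z^m c_m where (c_0, …, c_{n−1})^T := −𝔠_{C,E}^{−1}·w and w ∈ F^{n×1} is the column stacking C_ℓ(f_i)^n e_{1,n_i} for i = 1, …, k. -/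
/-!
Left evaluation at `(A, v)` is additive, and `(v (p q))^ℓ(A) = ((v p)^ℓ(A) q)^ℓ(A)`, so the
annihilators of `(A, v)` are closed under right multiples. For a monic `f` of degree `n ≥ 1` the
companion matrix is multiplication by `z` on `F[z]/f F[z]` in the basis `1, z, …, z^{n-1}`, with
`e₁` the class of `1`; hence evaluation at `(C_ℓ(f), e₁)` computes the remainder modulo `f` and
annihilates exactly `f F[z]`. Evaluation at the block diagonal pair is blockwise, which gives the
intersection `⋂ fᵢ F[z]`.

Since `𝔠 c` is the evaluation of `∑ zᵐ c_m`, a kernel vector of the controllability matrix is a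
common multiple of the `fᵢ` of degree `< n`, which vanishes by left coprimality. So `𝔠` is left
regular in a matrix ring over a division ring, i.e. a unit. Finally the monic polynomial
`P = zⁿ - (1, …, z^{n-1}) 𝔠⁻¹ Cⁿ E` is annihilated by construction, and the remainder modulo `P` of
any common multiple is a common multiple of degree `< n`, hence zero.
-/

open Polynomial Matrix Finset

section Helpers

variable {F : Type*} [DivisionRing F]

lemma mul_oneByOne_apply {m : Type*} (v : Matrix m (Fin 1) F) (c : F) (i : m) :
    (v * oneByOne c) i 0 = v i 0 * c := by
  simp [Matrix.mul_apply, oneByOne]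

lemma leftEval_apply {m : Type*} [Fintype m] [DecidableEq m]
    (A : Matrix m m F) (v : Matrix m (Fin 1) F) (p : F[X]) {N : ℕ} (hN : p.natDegree < N) (i : m) :
    leftEval A v p i 0 = ∑ j ∈ Finset.range N, (A ^ j * v) i 0 * p.coeff j := by
  have h : leftEval A v p i 0
      = ∑ j ∈ Finset.range (p.natDegree + 1), (A ^ j * v) i 0 * p.coeff j := by
    simp [leftEval, Matrix.sum_apply, mul_oneByOne_apply]
  rw [h]
  apply Finset.sum_subset
  · intro x hx
    simp only [Finset.mem_range] at hx ⊢
    omega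
  · intro x _ hx
    simp only [Finset.mem_range] at hx
    rw [coeff_eq_zero_of_natDegree_lt (by omega), mul_zero]

lemma leftEval_add {m : Type*} [Fintype m] [DecidableEq m]
    (A : Matrix m m F) (v : Matrix m (Fin 1) F) (p q : F[X]) :
    leftEval A v (p + q) = leftEval A v p + leftEval A v q := by
  ext i j
  obtain rfl : j = 0 := Subsingleton.elim _ _
  have h := natDegree_add_le p q
  have hp := le_max_left p.natDegree q.natDegree
  have hq := le_max_right p.natDegree q.natDegree
  rw [Matrix.add_apply, leftEval_apply A v (p + q) (Nat.lt_succ_of_le h),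
    leftEval_apply A v p (Nat.lt_succ_of_le hp), leftEval_apply A v q (Nat.lt_succ_of_le hq),
    ← Finset.sum_add_distrib]
  simp [mul_add]

lemma leftEval_monomial {m : Type*} [Fintype m] [DecidableEq m]
    (A : Matrix m m F) (v : Matrix m (Fin 1) F) (n : ℕ) (c : F) :
    leftEval A v (monomial n c) = A ^ n * v * oneByOne c := by
  ext i j
  obtain rfl : j = 0 := Subsingleton.elim _ _
  rw [leftEval_apply A v _ (Nat.lt_succ_of_le (natDegree_monomial_le c)),
    Finset.sum_eq_single n]
  · simp [mul_oneByOne_apply]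
  · intro b _ hb
    simp [coeff_monomial, hb.symm]
  · simp

/-- `(v (p q))^ℓ(A) = (w q)^ℓ(A)` with `w = (v p)^ℓ(A)`; in particular annihilators are closed under
right multiples. -/
lemma leftEval_mul {m : Type*} [Fintype m] [DecidableEq m]
    (A : Matrix m m F) (v : Matrix m (Fin 1) F) (p q : F[X]) :
    leftEval A v (p * q) = leftEval A (leftEval A v p) q := by
  induction q using Polynomial.induction_on' with
  | add q r hq hr => rw [mul_add, leftEval_add, leftEval_add, hq, hr]
  | monomial n c =>
    rw [leftEval_monomial]
    induction p using Polynomial.induction_on' with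
    | add q r hq hr =>
      rw [add_mul, leftEval_add, leftEval_add, hq, hr, Matrix.mul_add, Matrix.add_mul]
    | monomial k a =>
      rw [monomial_mul_monomial, leftEval_monomial, leftEval_monomial, add_comm k n, pow_add]
      have h : oneByOne (a * c) = oneByOne a * oneByOne c := by
        ext i j
        simp [oneByOne, Matrix.mul_apply]
      rw [h]
      simp only [Matrix.mul_assoc]

lemma leftEval_zero_left {m : Type*} [Fintype m] [DecidableEq m] (A : Matrix m m F) (q : F[X]) :
    leftEval A 0 q = 0 := by
  simp [leftEval]

/-- The companion matrix shifts: `C_ℓ(p)^j e₁ = e_{j+1}` for `j < n`. -/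
lemma Cl_pow_mul_e1 {n : ℕ} (p : F[X]) (j : ℕ) (hj : j < n) (i : Fin n) :
    (Cl n p ^ j * e1 F n) i 0 = if (i : ℕ) = j then 1 else 0 := by
  induction j generalizing i with
  | zero => simp [e1]
  | succ j ih =>
    rw [pow_succ', Matrix.mul_assoc, Matrix.mul_apply, Finset.sum_eq_single ⟨j, by omega⟩]
    · rw [ih (by omega)]
      simp only [Cl, Matrix.of_apply, if_true, mul_one]
      rw [if_neg (by omega)]
    · intro b _ hb
      rw [ih (by omega), if_neg (fun h => hb (Fin.ext h)), mul_zero]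
    · simp

lemma Cl_pow_self_mul_e1 {n : ℕ} (hn : 1 ≤ n) (p : F[X]) (i : Fin n) :
    (Cl n p ^ n * e1 F n) i 0 = -p.coeff i := by
  obtain ⟨m, rfl⟩ : ∃ m, n = m + 1 := ⟨n - 1, by omega⟩
  rw [pow_succ', Matrix.mul_assoc, Matrix.mul_apply, Finset.sum_eq_single ⟨m, by omega⟩]
  · rw [Cl_pow_mul_e1 p m (by omega)]
    simp [Cl]
  · intro b _ hb
    rw [Cl_pow_mul_e1 p m (by omega), if_neg (fun h => hb (Fin.ext h)), mul_zero]
  · simp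

lemma leftEval_Cl_of_lt {n : ℕ} (p g : F[X]) (hg : g.natDegree < n) (i : Fin n) :
    leftEval (Cl n p) (e1 F n) g i 0 = g.coeff i := by
  rw [leftEval_apply _ _ g hg, Finset.sum_eq_single (i : ℕ)]
  · rw [Cl_pow_mul_e1 p i i.2]
    simp
  · intro b hb hbi
    rw [Cl_pow_mul_e1 p b (Finset.mem_range.1 hb), if_neg (fun h => hbi h.symm), zero_mul]
  · simp

lemma leftEval_Cl_self {n : ℕ} (hn : 1 ≤ n) (p : F[X]) (hp : p.Monic) (hd : p.natDegree = n) :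
    leftEval (Cl n p) (e1 F n) p = 0 := by
  ext i j
  obtain rfl : j = 0 := Subsingleton.elim _ _
  rw [leftEval_apply _ _ p (show p.natDegree < n + 1 by omega), Finset.sum_range_succ,
    Cl_pow_self_mul_e1 hn, Finset.sum_eq_single (i : ℕ)]
  · have : p.coeff n = 1 := by rw [← hd]; exact hp
    rw [Cl_pow_mul_e1 p i i.2, this]
    simp
  · intro b hb hbi
    rw [Cl_pow_mul_e1 p b (Finset.mem_range.1 hb), if_neg (fun h => hbi h.symm), zero_mul]
  · simp

/-- A companion pair annihilates exactly the right multiples of its polynomial: evaluation only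
sees the remainder, whose coefficients it returns. -/
lemma leftEval_Cl_eq_zero_iff {n : ℕ} (hn : 1 ≤ n) (p : F[X]) (hp : p.Monic)
    (hd : p.natDegree = n) (g : F[X]) :
    leftEval (Cl n p) (e1 F n) g = 0 ↔ ∃ h : F[X], g = p * h := by
  constructor
  · intro h0
    have hlt : (g %ₘ p).natDegree < n := by
      rw [← hd]
      refine natDegree_modByMonic_lt g hp ?_
      rintro rfl
      simp at hd
      omega
    have h1 : leftEval (Cl n p) (e1 F n) (g %ₘ p) = 0 := by
      have h2 := h0
      rw [← modByMonic_add_div g p, leftEval_add, leftEval_mul, leftEval_Cl_self hn p hp hd,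
        leftEval_zero_left, add_zero] at h2
      exact h2
    refine (modByMonic_eq_zero_iff_dvd hp).1 ?_
    ext j
    by_cases hj : j < n
    · rw [← leftEval_Cl_of_lt p _ hlt ⟨j, hj⟩, h1]
      simp
    · rw [coeff_eq_zero_of_natDegree_lt (by omega), coeff_zero]
  · rintro ⟨h, rfl⟩
    rw [leftEval_mul, leftEval_Cl_self hn p hp hd, leftEval_zero_left]

/-- The columns `Cʲ E` of the reindexed block diagonal pair are the stacked columns
`C_ℓ(fᵢ)ʲ e₁`. -/
lemma block_pow_mul {k n : ℕ} {d : Fin k → ℕ} (f : Fin k → F[X])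
    (e : (Σ i : Fin k, Fin (d i)) ≃ Fin n) (j : ℕ) (s : Σ i : Fin k, Fin (d i)) :
    ((Matrix.reindex e e (Matrix.blockDiagonal' fun i => Cl (d i) (f i))) ^ j *
      (Matrix.of fun idx _ => if ((e.symm idx).2 : ℕ) = 0 then (1 : F) else 0 :
        Matrix (Fin n) (Fin 1) F)) (e s) 0
      = (Cl (d s.1) (f s.1) ^ j * e1 F (d s.1)) s.2 0 := by
  induction j generalizing s with
  | zero =>
    rw [pow_zero, pow_zero, Matrix.one_mul, Matrix.one_mul, Matrix.of_apply, e.symm_apply_apply]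
    rfl
  | succ j ih =>
    obtain ⟨a, x⟩ := s
    rw [pow_succ', Matrix.mul_assoc, Matrix.mul_apply, ← e.sum_comp, Fintype.sum_sigma,
      Finset.sum_eq_single a]
    · rw [pow_succ', Matrix.mul_assoc, Matrix.mul_apply]
      refine Finset.sum_congr rfl fun y _ => ?_
      rw [ih]
      simp [Matrix.blockDiagonal'_apply_eq]
    · intro b _ hb
      refine Finset.sum_eq_zero fun y _ => ?_
      simp [Matrix.blockDiagonal'_apply_ne _ _ _ hb.symm]
    · simp

lemma ctrbMat_mul_apply {n : ℕ} (A : Matrix (Fin n) (Fin n) F) (v : Matrix (Fin n) (Fin 1) F)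
    {m : Type*} (N : Matrix (Fin n) m F) (i : Fin n) (j : m) :
    (ctrbMat A v * N) i j = ∑ t : Fin n, (A ^ (t : ℕ) * v) i 0 * N t j := by
  simp [Matrix.mul_apply, ctrbMat]

lemma degree_sum_X_pow_lt {n : ℕ} (c : Fin n → F) :
    (∑ t : Fin n, X ^ (t : ℕ) * Polynomial.C (c t) : F[X]).degree < (n : WithBot ℕ) := by
  refine (degree_sum_le _ _).trans_lt ?_
  refine (Finset.sup_lt_iff (WithBot.bot_lt_coe n)).2 ?_
  intro t _
  rw [X_pow_mul_C]
  refine (degree_C_mul_X_pow_le _ _).trans_lt ?_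
  exact WithBot.coe_lt_coe.2 t.2

lemma coeff_sum_X_pow {n : ℕ} (c : Fin n → F) (t : Fin n) :
    (∑ t : Fin n, X ^ (t : ℕ) * Polynomial.C (c t) : F[X]).coeff t = c t := by
  rw [finsetSum_coeff, Finset.sum_eq_single t]
  · simp
  · intro b _ hb
    rw [coeff_mul_C, coeff_X_pow, if_neg (fun h => hb (Fin.ext h.symm)), zero_mul]
  · simp

lemma leftEval_sum_X_pow {n : ℕ} (A : Matrix (Fin n) (Fin n) F) (v : Matrix (Fin n) (Fin 1) F)
    (c : Fin n → F) (i : Fin n) :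
    leftEval A v (∑ t : Fin n, X ^ (t : ℕ) * Polynomial.C (c t)) i 0
      = ∑ t : Fin n, (A ^ (t : ℕ) * v) i 0 * c t := by
  have hn : 0 < n := i.pos
  have hlt : (∑ t : Fin n, X ^ (t : ℕ) * Polynomial.C (c t) : F[X]).natDegree < n := by
    by_cases h0 : (∑ t : Fin n, X ^ (t : ℕ) * Polynomial.C (c t) : F[X]) = 0
    · rw [h0]
      simpa using hn
    · exact (natDegree_lt_iff_degree_lt h0).2 (degree_sum_X_pow_lt c)
  rw [leftEval_apply _ _ _ hlt, ← Fin.sum_univ_eq_sum_range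
    (fun j => (A ^ j * v) i 0 * (∑ t : Fin n, X ^ (t : ℕ) * Polynomial.C (c t) : F[X]).coeff j)]
  refine Finset.sum_congr rfl fun t _ => ?_
  rw [coeff_sum_X_pow]

/-- A left regular square matrix over a division ring is a unit. Left regularity needs the
Artinian property of the opposite ring, which is again a matrix ring, over `Fᵐᵒᵖ`. -/
lemma isUnit_of_mul_eq_zero {n : ℕ} (M : Matrix (Fin n) (Fin n) F)
    (h : ∀ N : Matrix (Fin n) (Fin n) F, M * N = 0 → N = 0) : IsUnit M := by
  have : IsArtinianRing (Matrix (Fin n) (Fin n) F)ᵐᵒᵖ :=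
    (RingEquiv.mopMatrix (m := Fin n) (α := F)).isArtinianRing
  refine IsArtinianRing.isUnit_iff_isLeftRegular.2 fun a b hab => ?_
  have h1 : M * (a - b) = 0 := by
    rw [mul_sub, sub_eq_zero]
    exact hab
  exact sub_eq_zero.1 (h _ h1)

end Helpers

/-- Proposition `P:2.89`: for left-coprime monic `f₁,…,f_k`, the pair
`(C_ℓ(f₁,…,f_k), E)` (block-diagonal companion matrix with stacked `e₁`'s; here realised
up to the reindexing bijection `e`) is controllable, its annihilating ideal is
`∩ fᵢ·F[z]`, and the least right common multiple of the `fᵢ` is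
`zⁿ − 𝔄ₙ(z)·𝔠⁻¹·(Cⁿ E)`. -/
theorem statement8 {F : Type*} [DivisionRing F] {k : ℕ} (hk : 1 ≤ k) (d : Fin k → ℕ)
    (hd : ∀ i, 1 ≤ d i) (f : Fin k → F[X]) (hmon : ∀ i, (f i).Monic)
    (hdeg : ∀ i, (f i).natDegree = d i)
    (hcop : ∀ g : F[X], g ≠ 0 → (∀ i, ∃ h : F[X], g = f i * h) → (∑ i, d i) ≤ g.natDegree)
    (e : (Σ i : Fin k, Fin (d i)) ≃ Fin (∑ i, d i))
    (C : Matrix (Fin (∑ i, d i)) (Fin (∑ i, d i)) F)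
    (hC : C = Matrix.reindex e e (Matrix.blockDiagonal' fun i => Cl (d i) (f i)))
    (E : Matrix (Fin (∑ i, d i)) (Fin 1) F)
    (hE : E = Matrix.of fun idx _ => if ((e.symm idx).2 : ℕ) = 0 then (1 : F) else 0) :
    IsUnit (ctrbMat C E) ∧
    (∀ g : F[X], leftEval C E g = 0 ↔ ∀ i, ∃ h : F[X], g = f i * h) ∧
    (∀ W : Matrix (Fin (∑ i, d i)) (Fin (∑ i, d i)) F,
      ctrbMat C E * W = 1 → W * ctrbMat C E = 1 →
      ∀ g : F[X], (∀ i, ∃ h : F[X], g = f i * h) ↔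
        ∃ h : F[X],
          g = (X ^ (∑ i, d i) + ∑ m : Fin (∑ i, d i),
                X ^ (m : ℕ) * Polynomial.C ((-(W * (C ^ (∑ i, d i) * E))) m 0)) * h) := by
  have hann : ∀ g : F[X], leftEval C E g = 0 ↔ ∀ i, ∃ h : F[X], g = f i * h := by
    intro g
    have hblock : ∀ s : Σ i : Fin k, Fin (d i),
        leftEval C E g (e s) 0 = leftEval (Cl (d s.1) (f s.1)) (e1 F (d s.1)) g s.2 0 := by
      intro s
      rw [leftEval_apply _ _ g (Nat.lt_succ_self _), leftEval_apply _ _ g (Nat.lt_succ_self _)]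
      refine Finset.sum_congr rfl fun j _ => ?_
      rw [hC, hE, block_pow_mul]
    constructor
    · intro h0 i
      refine (leftEval_Cl_eq_zero_iff (hd i) (f i) (hmon i) (hdeg i) g).1 ?_
      ext x j
      obtain rfl : j = 0 := Subsingleton.elim _ _
      rw [← hblock ⟨i, x⟩, h0]
      simp
    · intro h0
      ext x j
      obtain rfl : j = 0 := Subsingleton.elim _ _
      obtain ⟨s, rfl⟩ := e.surjective x
      rw [hblock, (leftEval_Cl_eq_zero_iff (hd s.1) (f s.1) (hmon s.1) (hdeg s.1) g).2 (h0 s.1)]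
      simp
  have hsmall : ∀ g : F[X], leftEval C E g = 0 → g.degree < ((∑ i, d i : ℕ) : WithBot ℕ) → g = 0 := by
    intro g hg hlt
    by_contra h0
    exact absurd ((natDegree_lt_iff_degree_lt h0).2 hlt) (not_lt.2 (hcop g h0 ((hann g).1 hg)))
  refine ⟨?_, hann, ?_⟩
  · refine isUnit_of_mul_eq_zero _ fun N hN => ?_
    ext t j
    -- Column `j` of `N` gives the coefficients of a common right multiple of degree `< n`.
    have h0 := hsmall (∑ t : Fin (∑ i, d i), X ^ (t : ℕ) * Polynomial.C (N t j)) ?_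
      (degree_sum_X_pow_lt fun t => N t j)
    · have h1 := coeff_sum_X_pow (fun t => N t j) t
      rw [h0] at h1
      simpa using h1.symm
    · ext i l
      obtain rfl : l = 0 := Subsingleton.elim _ _
      rw [leftEval_sum_X_pow C E (fun t => N t j), ← ctrbMat_mul_apply, hN]
      simp
  · intro W hW _ g
    set c : Fin (∑ i, d i) → F := fun m => (-(W * (C ^ (∑ i, d i) * E))) m 0 with hc
    set R : F[X] := ∑ m : Fin (∑ i, d i), X ^ (m : ℕ) * Polynomial.C (c m) with hR
    have hRdeg : R.degree < ((∑ i, d i : ℕ) : WithBot ℕ) := degree_sum_X_pow_lt c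
    have hPmon : (X ^ (∑ i, d i) + R).Monic := monic_X_pow_add hRdeg
    have hPdeg : (X ^ (∑ i, d i) + R).degree = ((∑ i, d i : ℕ) : WithBot ℕ) := by
      rw [degree_add_eq_left_of_degree_lt] <;> rw [degree_X_pow]
      exact hRdeg
    have hP : leftEval C E (X ^ (∑ i, d i) + R) = 0 := by
      ext i l
      obtain rfl : l = 0 := Subsingleton.elim _ _
      have h1 : leftEval C E (X ^ (∑ i, d i)) = C ^ (∑ i, d i) * E := by
        rw [← monomial_one_right_eq_X_pow, leftEval_monomial]
        have : oneByOne (1 : F) = 1 := by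
          ext a b
          obtain rfl : a = b := Subsingleton.elim _ _
          simp [oneByOne]
        rw [this, Matrix.mul_one]
      have h2 : leftEval C E R i 0 = -(C ^ (∑ i, d i) * E) i 0 := by
        rw [hR, leftEval_sum_X_pow, hc, ← ctrbMat_mul_apply, Matrix.mul_neg, ← Matrix.mul_assoc, hW,
          Matrix.one_mul, Matrix.neg_apply]
      rw [leftEval_add, Matrix.add_apply, h1, h2, Matrix.zero_apply, add_neg_cancel]
    rw [← hann]
    constructor
    · intro hg
      refine (modByMonic_eq_zero_iff_dvd hPmon).1 (hsmall _ ?_ ?_)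
      · rw [← modByMonic_add_div g (X ^ (∑ i, d i) + R), leftEval_add, leftEval_mul, hP,
          leftEval_zero_left, add_zero] at hg
        exact hg
      · rw [← hPdeg]
        exact degree_modByMonic_lt g hPmon
    · rintro ⟨h, rfl⟩
      rw [leftEval_mul, hP, leftEval_zero_left]
end
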